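/- Let g_1, g_2 be binary morphisms on X = {a,b} with g_1(a) = a^s, g_1(b) = a^{γ_1} b a^{α_1} ⋯ b a^{α_{p-1}} b a^{γ_2}, g_2(a) = a^t, g_2(b) = a^{δ_1} b a^{β_1} ⋯ b a^{β_{q-1}} b a^{δ_2}, where s,t ≥ 1, p,q ≥ 2 and all exponents are nonnegative. Assume p and q are multiplicatively independent. Then g_1 g_2 = g_2 g_1 if and only if either (i) g_1(b) and g_2(b) are both powers of b, or (ii) g_1(a) = g_2(a) = a, g_1(b) = (b a^α)^{p-1} b and g_2(b) = (b a^α)^{q-1} b for some common α ≥ 0. -/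

import Mathlib

/-- Words over the binary alphabet: `false` is the letter `a`, `true` is the letter `b`. -/
abbrev Word := List Bool

/-- The morphism of the free monoid determined by the images `g` of the letters. -/
def applyG (g : Bool → Word) (w : Word) : Word := w.flatMap g

/-- `a^n`. -/
def rep (n : ℕ) : Word := List.replicate n false

/-- `b a^{α 1} b a^{α 2} ⋯ b a^{α (p-1)} b`, a word with `p` occurrences of `b`. -/
def blockWord (p : ℕ) (α : ℕ → ℕ) : Word :=
  ((List.range (p - 1)).flatMap fun i => true :: rep (α (i + 1))) ++ [true]

/-- `w^k`. -/
def wordPow (w : Word) (k : ℕ) : Word := (List.replicate k w).flatten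

/-- `u` and `v` are `a`-conjugates. -/
def AConj (u v : Word) : Prop :=
  ∃ p q r s : ℕ, ∃ w : Word,
    u = rep p ++ w ++ rep q ∧ v = rep r ++ w ++ rep s ∧ p + q = r + s

/-- `w` is the infinite word `ω(g)`: for every `n`, the word obtained from `g^n(b)` by deleting
all occurrences of `a` preceding the first occurrence of `b` is a prefix of `w`. -/
def IsOmega (g : Bool → Word) (w : ℕ → Bool) : Prop :=
  ∀ n k : ℕ, ∀ hk : k < (((applyG g)^[n] [true]).dropWhile (fun x => !x)).length,
    (((applyG g)^[n] [true]).dropWhile (fun x => !x)).get ⟨k, hk⟩ = w k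

/-- `Aw w i` (for `i ≥ 1`): the number of occurrences of `a` in `w` strictly between the
`i`-th and `(i+1)`-th occurrences of `b` in `w`. -/
noncomputable def Aw (w : ℕ → Bool) (i : ℕ) : ℕ :=
  Nat.nth (fun n => w n = true) i - Nat.nth (fun n => w n = true) (i - 1) - 1


theorem aux_exists_incomp (p q : ℕ) (hp : 2 ≤ p) (hq : 2 ≤ q)
    (hind : ∀ i j : ℕ, p ^ i = q ^ j → i = 0 ∧ j = 0) :
    ∃ k l : ℕ, ¬ p ^ k ∣ q ^ l ∧ ¬ q ^ l ∣ p ^ k := by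
  have key : ∀ x y : ℕ, p.factorization y * q.factorization x
      < p.factorization x * q.factorization y →
      ∃ k l : ℕ, ¬ p ^ k ∣ q ^ l ∧ ¬ q ^ l ∣ p ^ k := by
    intro x y h
    refine ⟨q.factorization x + q.factorization y, p.factorization x + p.factorization y, ?_, ?_⟩
    · intro hd
      have h1 := (Nat.factorization_le_iff_dvd (by positivity) (by positivity)).2 hd x
      simp only [Nat.factorization_pow, Finsupp.smul_apply, smul_eq_mul] at h1
      nlinarith
    · intro hd
      have h1 := (Nat.factorization_le_iff_dvd (by positivity) (by positivity)).2 hd y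
      simp only [Nat.factorization_pow, Finsupp.smul_apply, smul_eq_mul] at h1
      nlinarith
  by_contra hcon
  have heq : ∀ x y : ℕ, p.factorization y * q.factorization x
      = p.factorization x * q.factorization y := by
    intro x y
    rcases lt_trichotomy (p.factorization y * q.factorization x)
      (p.factorization x * q.factorization y) with h | h | h
    · exact absurd (key x y h) hcon
    · exact h
    · exact absurd (key y x h) hcon
  obtain ⟨x, hx, hxp⟩ := Nat.exists_prime_and_dvd (show p ≠ 1 by omega)
  have hpos : 0 < p.factorization x := hx.factorization_pos_of_dvd (by omega) hxp
  have : p ^ (q.factorization x) = q ^ (p.factorization x) := by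
    apply Nat.eq_of_factorization_eq (by positivity) (by positivity)
    intro y
    simp only [Nat.factorization_pow, Finsupp.smul_apply, smul_eq_mul]
    have := heq x y
    nlinarith
  have := (hind _ _ this).2
  omega

theorem aux_per_modEq (A : ℕ → ℕ) (P : ℕ) (h : ∀ x i, ¬ P ∣ x → A (x + P * i) = A x)
    (x z : ℕ) (hx : ¬ P ∣ x) (hz : z ≡ x [MOD P]) : A z = A x := by
  rcases le_total x z with hl | hl
  · obtain ⟨i, hi⟩ := (Nat.modEq_iff_dvd' hl).1 hz.symm
    have : z = x + P * i := by omega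
    rw [this, h x i hx]
  · obtain ⟨i, hi⟩ := (Nat.modEq_iff_dvd' hl).1 hz
    have e : x = z + P * i := by omega
    have hz' : ¬ P ∣ z := by
      intro hd
      exact hx (e ▸ dvd_add hd (dvd_mul_right _ _))
    rw [e, h z i hz']

theorem aux_const (A : ℕ → ℕ) (P Q a s b t : ℕ) (hs : 1 ≤ s) (ht : 1 ≤ t)
    (hP : 0 < P) (hPQ : ¬ P ∣ Q) (hQP : ¬ Q ∣ P)
    (hP1 : ∀ m, 0 < m → A (P * m) = a + s * A m)
    (hP2 : ∀ x i, ¬ P ∣ x → A (x + P * i) = A x)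
    (hQ1 : ∀ m, 0 < m → A (Q * m) = b + t * A m)
    (hQ2 : ∀ x i, ¬ Q ∣ x → A (x + Q * i) = A x) :
    ∀ m, 0 < m → A m = A 1 := by
  have h1 : ∀ x y, ¬ P ∣ x → ¬ Q ∣ y → x ≡ y [MOD (Nat.gcd P Q)] → A x = A y := by
    intro x y hx hy hxy
    obtain ⟨z, hz1, hz2⟩ := Nat.chineseRemainder' hxy
    rw [← aux_per_modEq A P hP2 x z hx hz1, ← aux_per_modEq A Q hQ2 y z hy hz2]
  obtain ⟨D, u, v, hD, hco, rfl, rfl⟩ : ∃ D u v, 0 < D ∧ Nat.Coprime u v ∧ P = D * u ∧ Q = D * v := by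
    obtain ⟨u, v, hco, hu, hv⟩ := Nat.exists_coprime P Q
    exact ⟨Nat.gcd P Q, u, v, Nat.gcd_pos_of_pos_left _ hP, hco, by rw [mul_comm]; exact hu,
      by rw [mul_comm]; exact hv⟩
  have hg : Nat.gcd (D * u) (D * v) = D := by
    rw [Nat.gcd_mul_left, hco, mul_one]
  rw [hg] at h1
  have hu1 : ¬ u ∣ 1 := by
    intro h
    rw [Nat.dvd_one] at h
    subst h
    exact hPQ (by simp)
  have hv1 : ¬ v ∣ 1 := by
    intro h
    rw [Nat.dvd_one] at h
    subst h
    exact hQP (by simp)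
  have hdv : ∀ x y, D * x ∣ D * y ↔ x ∣ y := fun x y => Nat.mul_dvd_mul_iff_left hD
  have hT1 : ∀ m, ¬ u ∣ m → A (D * m) = A D := by
    intro m hm
    refine h1 _ _ (by rwa [hdv]) ?_ ?_
    · have := hdv v 1
      rw [mul_one] at this
      rwa [this]
    · simp [Nat.ModEq]
  have hT2 : ∀ m, ¬ v ∣ m → A (D * m) = A D := by
    intro m hm
    refine (h1 _ _ ?_ (by rwa [hdv]) ?_).symm
    · have := hdv u 1
      rw [mul_one] at this
      rwa [this]
    · simp [Nat.ModEq]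
  have pos_of : ∀ w m : ℕ, ¬ w ∣ m → 0 < m := by
    intro w m h
    rcases Nat.eq_zero_or_pos m with rfl | h'
    · exact absurd (dvd_zero _) h
    · exact h'
  have hE1 : ∀ m, ¬ v ∣ m → a + s * A m = A D := by
    intro m hm
    rw [← hP1 m (pos_of _ _ hm), mul_assoc]
    apply hT2
    intro h
    exact hm (hco.symm.dvd_of_dvd_mul_left h)
  have hE2 : ∀ m, ¬ u ∣ m → b + t * A m = A D := by
    intro m hm
    rw [← hQ1 m (pos_of _ _ hm), mul_assoc]
    apply hT1
    intro h
    exact hm (hco.dvd_of_dvd_mul_left h)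
  have c1 := hE1 1 hv1
  have c2 := hE2 1 hu1
  have canS : ∀ x y, a + s * x = a + s * y → x = y := fun x y h =>
    Nat.eq_of_mul_eq_mul_left hs (by omega)
  have canT : ∀ x y, b + t * x = b + t * y → x = y := fun x y h =>
    Nat.eq_of_mul_eq_mul_left ht (by omega)
  intro m
  induction m using Nat.strong_induction_on with
  | _ m ih =>
  intro hm
  by_cases hv : v ∣ m
  swap
  · exact canS _ _ ((hE1 m hv).trans c1.symm)
  by_cases hu : u ∣ m
  swap
  · exact canT _ _ ((hE2 m hu).trans c2.symm)
  obtain ⟨r, rfl⟩ := hco.mul_dvd_of_dvd_of_dvd hu hv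
  have hr : 0 < r := Nat.pos_of_mul_pos_left hm
  have huv := Nat.pos_of_mul_pos_right hm
  have hu0 : 0 < u := Nat.pos_of_mul_pos_right huv
  have hv0 : 0 < v := Nat.pos_of_mul_pos_left huv
  rcases lt_trichotomy u v with h | h | h
  · have h3 := ih (u * u * r) (by
      apply Nat.mul_lt_mul_of_pos_right _ hr
      exact Nat.mul_lt_mul_of_pos_left h hu0) (by positivity)
    apply canS
    rw [c1, ← hP1 _ hm, show D * u * (u * v * r) = D * v * (u * u * r) by ring,
      hQ1 _ (by positivity), h3, c2]
  · subst h
    rw [Nat.coprime_self] at hco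
    subst hco
    simp at hu1
  · have h3 := ih (v * v * r) (by
      apply Nat.mul_lt_mul_of_pos_right _ hr
      exact Nat.mul_lt_mul_of_pos_right h hv0) (by positivity)
    apply canT
    rw [c2, ← hQ1 _ hm, show D * v * (u * v * r) = D * u * (v * v * r) by ring,
      hP1 _ (by positivity), h3, c1]

theorem aux_pow (A : ℕ → ℕ) (p a s : ℕ) (hs : 1 ≤ s)
    (h1 : ∀ m, 0 < m → A (p * m) = a + s * A m)
    (h2 : ∀ x i, ¬ p ∣ x → A (x + p * i) = A x) (hp : 0 < p) (k : ℕ) :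
    ∃ a' s', 1 ≤ s' ∧ (∀ m, 0 < m → A (p ^ k * m) = a' + s' * A m) ∧
      (∀ x i, ¬ p ^ k ∣ x → A (x + p ^ k * i) = A x) := by
  induction k with
  | zero => exact ⟨0, 1, le_refl _, by simp, by simp⟩
  | succ k ih =>
    obtain ⟨a', s', hs', e1, e2⟩ := ih
    refine ⟨a + s * a', s * s', Nat.mul_pos hs hs', ?_, ?_⟩
    · intro m hm
      rw [pow_succ', mul_assoc, h1 _ (by positivity), e1 m hm]
      ring
    · intro x i hx
      by_cases hpx : p ∣ x
      · obtain ⟨y, rfl⟩ := hpx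
        rw [pow_succ'] at hx
        have hy : ¬ p ^ k ∣ y := fun h => hx (Nat.mul_dvd_mul_left p h)
        have hy0 : 0 < y := by
          rcases Nat.eq_zero_or_pos y with rfl | h'
          · simp at hy
          · exact h'
        rw [pow_succ', mul_assoc, ← mul_add, h1 _ (by positivity), e2 _ _ hy, h1 _ hy0]
      · rw [pow_succ', mul_assoc, h2 _ _ hpx]

def AF (p s c : ℕ) (a : ℕ → ℕ) (X : ℕ → ℕ) (n : ℕ) : ℕ :=
  if p ∣ n then c + s * X (n / p) else a (n % p)

def Afix (p s c : ℕ) (a : ℕ → ℕ) (n : ℕ) : ℕ :=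
  if _h : p ∣ n ∧ 0 < n ∧ 2 ≤ p then c + s * Afix p s c a (n / p) else a (n % p)
termination_by n
decreasing_by exact Nat.div_lt_self _h.2.1 _h.2.2

theorem Afix_eq (p s c : ℕ) (a : ℕ → ℕ) (hp : 2 ≤ p) (n : ℕ) (hn : 0 < n) :
    Afix p s c a n = AF p s c a (Afix p s c a) n := by
  rw [Afix, AF]
  simp [hn, hp]

theorem div_pos_aux (p n : ℕ) (hp : 2 ≤ p) (hn : 0 < n) (h : p ∣ n) : 0 < n / p :=
  Nat.div_pos (Nat.le_of_dvd hn h) (by omega)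

theorem AF_congr (p s c : ℕ) (a X Y : ℕ → ℕ) (hp : 2 ≤ p) (h : ∀ n, 0 < n → X n = Y n)
    (n : ℕ) (hn : 0 < n) : AF p s c a X n = AF p s c a Y n := by
  unfold AF
  split_ifs with hd
  · rw [h _ (div_pos_aux p n hp hn hd)]
  · rfl

theorem AF_AF (p q s t c d : ℕ) (a b W X : ℕ → ℕ) (hp : 2 ≤ p) (hq : 2 ≤ q)
    (hW1 : ∀ m r, m < q → 0 < r → r < p → W (p * m + r) = a r)
    (hW2 : ∀ m, 0 < m → m < q → W (p * m) = c + s * b m)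
    (n : ℕ) : AF p s c a (AF q t d b X) n =
      if p * q ∣ n then c + s * d + s * t * X (n / (p * q)) else W (n % (p * q)) := by
  have hpq : 0 < p * q := by positivity
  by_cases hd : p * q ∣ n
  · rw [if_pos hd]
    obtain ⟨m, rfl⟩ := hd
    have e : p * q * m / p = q * m := by
      rw [mul_assoc, Nat.mul_div_cancel_left _ (by omega)]
    have e2 : q * m / q = m := Nat.mul_div_cancel_left _ (by omega)
    rw [AF, if_pos (by rw [mul_assoc]; exact dvd_mul_right _ _), e, AF,
      if_pos (dvd_mul_right _ _), e2, Nat.mul_div_cancel_left _ hpq]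
    ring
  · rw [if_neg hd]
    have hx : n % (p * q) = p * ((n / p) % q) + n % p := by
      rw [Nat.mod_mul]; ring
    rw [hx]
    have hlt : (n / p) % q < q := Nat.mod_lt _ (by omega)
    by_cases h1 : p ∣ n
    · obtain ⟨m, rfl⟩ := h1
      have hm : ¬ q ∣ m := fun h => hd (Nat.mul_dvd_mul_left p h)
      have e : p * m / p = m := Nat.mul_div_cancel_left _ (by omega)
      rw [AF, if_pos (dvd_mul_right _ _), e, AF, if_neg hm]
      rw [e] at hlt
      simp only [Nat.mul_mod_right, add_zero]
      rw [hW2 _ (Nat.emod_pos_of_not_dvd hm) hlt]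
    · rw [AF, if_neg h1, hW1 _ _ hlt (Nat.emod_pos_of_not_dvd h1) (Nat.mod_lt _ (by omega))]

theorem aux_core (p q s t c d : ℕ) (a b W : ℕ → ℕ) (hp : 2 ≤ p) (hq : 2 ≤ q)
    (hs : 1 ≤ s) (ht : 1 ≤ t)
    (hW1 : ∀ m r, m < q → 0 < r → r < p → W (p * m + r) = a r)
    (hW2 : ∀ m, 0 < m → m < q → W (p * m) = c + s * b m)
    (hV1 : ∀ m r, m < p → 0 < r → r < q → W (q * m + r) = b r)
    (hV2 : ∀ m, 0 < m → m < p → W (q * m) = d + t * a m)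
    (hcd : c + s * d = d + t * c)
    (hind : ∀ i j : ℕ, p ^ i = q ^ j → i = 0 ∧ j = 0) :
    ∃ x, (∀ r, 0 < r → r < p → a r = x) ∧ (∀ r, 0 < r → r < q → b r = x) ∧
      x = c + s * x ∧ x = d + t * x := by
  set A := Afix p s c a with hA
  have hAp : ∀ n, 0 < n → A n = AF p s c a A n := fun n hn => Afix_eq p s c a hp n hn
  have hcomm : ∀ X n, AF p s c a (AF q t d b X) n = AF q t d b (AF p s c a X) n := by
    intro X n
    rw [AF_AF p q s t c d a b W X hp hq hW1 hW2, AF_AF q p t s d c b a W X hq hp hV1 hV2,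
      mul_comm q p, mul_comm t s, hcd]
  have hB : ∀ n, 0 < n → AF q t d b A n = AF p s c a (AF q t d b A) n := by
    intro n hn
    rw [hcomm]
    exact AF_congr q t d b _ _ hq hAp n hn
  have hAq : ∀ n, 0 < n → A n = AF q t d b A n := by
    intro n
    induction n using Nat.strong_induction_on with
    | _ n ih =>
    intro hn
    rw [hB n hn, hAp n hn]
    unfold AF
    split_ifs with h1 h2 h2
    · have := ih (n / p) (Nat.div_lt_self hn hp) (div_pos_aux p n hp hn h1)
      rw [this, AF, if_pos h2]
    · have := ih (n / p) (Nat.div_lt_self hn hp) (div_pos_aux p n hp hn h1)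
      rw [this, AF, if_neg h2]
    · rfl
  have gen : ∀ (p s c : ℕ) (a : ℕ → ℕ), 2 ≤ p → (∀ n, 0 < n → A n = AF p s c a A n) →
      (∀ m, 0 < m → A (p * m) = c + s * A m) ∧ (∀ x i, ¬ p ∣ x → A (x + p * i) = A x) ∧
      (∀ r, 0 < r → r < p → A r = a r) := by
    intro p s c a hp h
    refine ⟨?_, ?_, ?_⟩
    · intro m hm
      rw [h _ (by positivity), AF, if_pos (dvd_mul_right _ _),
        Nat.mul_div_cancel_left _ (by omega)]
    · intro x i hx
      have hx0 : 0 < x := by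
        rcases Nat.eq_zero_or_pos x with rfl | h'
        · simp at hx
        · exact h'
      have hx' : ¬ p ∣ x + p * i := by
        rwa [Nat.dvd_add_left (dvd_mul_right _ _)]
      rw [h _ (by omega), AF, if_neg hx', h x hx0, AF, if_neg hx, Nat.add_mul_mod_self_left]
    · intro r h0 hr
      rw [h r h0, AF, if_neg (Nat.not_dvd_of_pos_of_lt h0 hr), Nat.mod_eq_of_lt hr]
  obtain ⟨p1, p2, p3⟩ := gen p s c a hp hAp
  obtain ⟨q1, q2, q3⟩ := gen q t d b hq hAq
  obtain ⟨k, l, hkl, hlk⟩ := aux_exists_incomp p q hp hq hind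
  obtain ⟨c', s', hs', P1, P2⟩ := aux_pow A p c s hs p1 p2 (by omega) k
  obtain ⟨d', t', ht', Q1, Q2⟩ := aux_pow A q d t ht q1 q2 (by omega) l
  have hc := aux_const A (p ^ k) (q ^ l) c' s' d' t' hs' ht' (by positivity) hkl hlk P1 P2 Q1 Q2
  refine ⟨A 1, ?_, ?_, ?_, ?_⟩
  · intro r h0 hr
    rw [← p3 r h0 hr, hc r h0]
  · intro r h0 hr
    rw [← q3 r h0 hr, hc r h0]
  · rw [← p1 1 one_pos, hc (p * 1) (by omega)]
  · rw [← q1 1 one_pos, hc (q * 1) (by omega)]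

/-! Words -/

def KK : Word → ℕ → ℕ
  | [], _ => 0
  | false :: w, 0 => KK w 0 + 1
  | false :: w, n + 1 => KK w (n + 1)
  | true :: _, 0 => 0
  | true :: w, n + 1 => KK w n

theorem KK_append (u v : Word) (n : ℕ) :
    KK (u ++ v) n = KK u n + if u.count true ≤ n then KK v (n - u.count true) else 0 := by
  induction u generalizing n with
  | nil => simp [KK]
  | cons x u ih =>
    cases x <;> cases n <;> simp [KK, ih] <;> ring

theorem KK_rep (k n : ℕ) : KK (rep k) n = if n = 0 then k else 0 := by
  unfold rep
  induction k with
  | zero => simp [KK]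
  | succ k ih => cases n <;> simp_all [List.replicate_succ, KK]

theorem count_rep (k : ℕ) : (rep k).count true = 0 := by
  simp [rep, List.count_replicate]

theorem KK_big (w : Word) (n : ℕ) (h : w.count true < n) : KK w n = 0 := by
  induction w generalizing n with
  | nil => simp [KK]
  | cons x w ih =>
    cases x <;> cases n <;> simp_all [KK]

theorem KK_blk (P : ℕ) (α : ℕ → ℕ) :
    ((List.range P).flatMap fun i => true :: rep (α (i + 1))).count true = P ∧
    ∀ n, KK ((List.range P).flatMap fun i => true :: rep (α (i + 1))) n =
      if 0 < n ∧ n ≤ P then α n else 0 := by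
  induction P with
  | zero =>
    refine ⟨by simp, fun n => ?_⟩
    rw [if_neg (by omega)]
    simp [KK]
  | succ P ih =>
    obtain ⟨h1, h2⟩ := ih
    rw [List.range_succ, List.flatMap_append]
    refine ⟨by simp [List.count_append, h1, count_rep], fun n => ?_⟩
    rw [KK_append, h1, h2]
    simp only [List.flatMap_cons, List.flatMap_nil, List.append_nil]
    rcases lt_trichotomy n (P + 1) with h | h | h
    · have : KK (true :: rep (α (P + 1))) (n - P) = 0 := by
        rw [show n - P = 0 by omega, KK]
      rw [this]
      by_cases h0 : 0 < n
      · simp [h0, show n ≤ P by omega, show n ≤ P + 1 by omega]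
      · simp [h0]
    · subst h
      simp [KK, KK_rep]
    · obtain ⟨j, rfl⟩ : ∃ j, n = P + (j + 1 + 1) := ⟨n - P - 2, by omega⟩
      rw [Nat.add_sub_cancel_left, KK, KK_rep, if_neg (show ¬ (j + 1 = 0) by omega),
        if_neg (show ¬ (0 < P + (j + 1 + 1) ∧ P + (j + 1 + 1) ≤ P) by omega),
        if_neg (show ¬ (0 < P + (j + 1 + 1) ∧ P + (j + 1 + 1) ≤ P + 1) by omega)]
      simp

theorem gb_facts (p : ℕ) (hp : 2 ≤ p) (α : ℕ → ℕ) (x y : ℕ) :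
    (rep x ++ blockWord p α ++ rep y).count true = p ∧
    KK (rep x ++ blockWord p α ++ rep y) 0 = x ∧
    KK (rep x ++ blockWord p α ++ rep y) p = y ∧
    ∀ r, 0 < r → r < p → KK (rep x ++ blockWord p α ++ rep y) r = α r := by
  obtain ⟨P, rfl⟩ : ∃ P, p = P + 1 := ⟨p - 1, by omega⟩
  obtain ⟨h1, h2⟩ := KK_blk P α
  have hc : (blockWord (P + 1) α).count true = P + 1 := by
    simp only [blockWord, Nat.add_sub_cancel, List.count_append, h1]
    simp
  have hk : ∀ n, KK (blockWord (P + 1) α) n = if 0 < n ∧ n ≤ P then α n else 0 := by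
    intro n
    simp only [blockWord, Nat.add_sub_cancel, KK_append, h1, h2]
    have : KK [true] (n - P) = 0 := by
      cases (n - P) <;> simp [KK]
    simp [this]
  have hk2 : ∀ n, KK (rep x ++ blockWord (P + 1) α ++ rep y) n = (if n = 0 then x else 0) +
      (if 0 < n ∧ n ≤ P then α n else 0) + if P + 1 ≤ n then (if n - (P + 1) = 0 then y else 0) else 0 := by
    intro n
    simp [KK_append, count_rep, hc, hk, KK_rep, add_assoc]
  refine ⟨by simp [List.count_append, count_rep, hc], ?_, ?_, ?_⟩
  · rw [hk2]; simp
  · rw [hk2]; simp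
  · intro r h0 hr
    rw [hk2, if_neg (by omega), if_pos (by omega), if_neg (by omega)]
    simp

theorem KK_apply (g : Bool → Word) (s p : ℕ) (hp : 2 ≤ p) (ha : g false = rep s)
    (hb : (g true).count true = p) (w : Word) :
    (∀ m r, m < w.count true → 0 < r → r < p → KK (applyG g w) (p * m + r) = KK (g true) r) ∧
    (∀ m, KK (applyG g w) (p * m) = s * KK w m +
      (if 0 < m ∧ m ≤ w.count true then KK (g true) p else 0) +
      (if m < w.count true then KK (g true) 0 else 0)) := by
  induction w with
  | nil =>
    refine ⟨by simp, fun m => ?_⟩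
    rw [if_neg (by simp; omega)]
    simp [applyG, KK]
  | cons x w ih =>
    obtain ⟨i1, i2⟩ := ih
    have happ : applyG g (x :: w) = g x ++ applyG g w := by simp [applyG]
    rw [happ]
    cases x with
    | false =>
      simp only [KK_append, ha, count_rep, KK_rep, Nat.sub_zero, Nat.zero_le, if_true]
      refine ⟨?_, ?_⟩
      · intro m r hm h0 hr
        rw [if_neg (by omega), i1 m r (by simpa using hm) h0 hr]
        simp
      · intro m
        rw [i2]
        cases m with
        | zero => simp [KK]; ring
        | succ m =>
          rw [if_neg (by simp; omega)]
          simp [KK]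
    | true =>
      simp only [KK_append, hb]
      refine ⟨?_, ?_⟩
      · intro m r hm h0 hr
        cases m with
        | zero => simp [show ¬ p ≤ r by omega]
        | succ m =>
          rw [KK_big (g true) _ (by rw [hb]; nlinarith), if_pos (by nlinarith),
            show p * (m + 1) + r - p = p * m + r by
              rw [mul_add, mul_one]; omega, i1 m r (by simpa using hm) h0 hr]
          simp
      · intro m
        cases m with
        | zero => simp [KK, show ¬ p ≤ 0 by omega]
        | succ m =>
          rw [if_pos (by nlinarith), show p * (m + 1) - p = p * m by
              rw [mul_add, mul_one]; omega, i2]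
          cases m with
          | zero =>
            simp [KK]
            ring
          | succ m =>
            rw [KK_big (g true) _ (by rw [hb]; nlinarith)]
            simp [KK]

theorem blockWord_congr (p : ℕ) (α β : ℕ → ℕ) (h : ∀ r, 0 < r → r < p → α r = β r) :
    blockWord p α = blockWord p β := by
  unfold blockWord
  congr 1
  apply List.flatMap_congr
  intro i hi
  rw [List.mem_range] at hi
  rw [h (i + 1) (by omega) (by omega)]

theorem blockWord_pow (p : ℕ) (hp : 2 ≤ p) (c : ℕ) :
    blockWord p (fun _ => c) ++ rep c = wordPow (true :: rep c) p := by
  obtain ⟨P, rfl⟩ : ∃ P, p = P + 1 := ⟨p - 1, by omega⟩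
  have : ∀ P, ((List.range P).flatMap fun _ => true :: rep c) = wordPow (true :: rep c) P := by
    intro P
    induction P with
    | zero => simp [wordPow]
    | succ P ih => 
      rw [List.range_succ, List.flatMap_append, ih]
      simp [wordPow, List.replicate_succ']
  simp only [blockWord, Nat.add_sub_cancel, this]
  simp [wordPow, List.replicate_succ']

theorem blockWord_zero (p : ℕ) (hp : 2 ≤ p) :
    blockWord p (fun _ => 0) = List.replicate p true := by
  have := blockWord_pow p hp 0
  simpa [rep, wordPow] using this

theorem applyG_append (g : Bool → Word) (u v : Word) :
    applyG g (u ++ v) = applyG g u ++ applyG g v := by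
  simp [applyG]

theorem applyG_rep (g : Bool → Word) (s n : ℕ) (h : g false = rep s) :
    applyG g (rep n) = rep (n * s) := by
  induction n with
  | zero => simp [applyG, rep]
  | succ n ih =>
    have : rep (n + 1) = [false] ++ rep n := by simp [rep, List.replicate_succ]
    rw [this, applyG_append, ih]
    simp [applyG, h, rep]
    ring

theorem applyG_repb (g : Bool → Word) (s n : ℕ) (h : g true = List.replicate s true) :
    applyG g (List.replicate n true) = List.replicate (n * s) true := by
  induction n with
  | zero => simp [applyG]
  | succ n ih =>
    have : List.replicate (n + 1) true = [true] ++ List.replicate n true := by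
      simp [List.replicate_succ]
    rw [this, applyG_append, ih]
    simp [applyG, h]
    ring

theorem applyG_wordPow (g : Bool → Word) (w : Word) (n : ℕ) :
    applyG g (wordPow w n) = wordPow (applyG g w) n := by
  induction n with
  | zero => simp [applyG, wordPow]
  | succ n ih =>
    have : ∀ w : Word, wordPow w (n + 1) = w ++ wordPow w n := by
      simp [wordPow, List.replicate_succ]
    rw [this, applyG_append, ih, this]

theorem wordPow_mul (w : Word) (m n : ℕ) : wordPow (wordPow w m) n = wordPow w (m * n) := by
  induction n with
  | zero => simp [wordPow]
  | succ n ih =>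
    have h1 : ∀ w : Word, wordPow w (n + 1) = w ++ wordPow w n := by
      simp [wordPow, List.replicate_succ]
    rw [h1, ih]
    simp only [wordPow]
    rw [← List.flatten_append, List.replicate_append_replicate]
    congr 2
    ring

theorem block_apply (g : Bool → Word) (p q c : ℕ) (hp : 2 ≤ p) (hq : 2 ≤ q)
    (ha : g false = [false]) (hb : g true = blockWord p (fun _ => c)) :
    applyG g (blockWord q (fun _ => c)) ++ rep c = wordPow (true :: rep c) (p * q) := by
  have hr : applyG g (rep c) = rep c := by
    rw [applyG_rep g 1 c (by simp [ha, rep]), mul_one]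
  have he : applyG g (true :: rep c) = wordPow (true :: rep c) p := by
    rw [← blockWord_pow p hp, ← hb]
    have : true :: rep c = [true] ++ rep c := rfl
    rw [this, applyG_append, hr]
    simp [applyG]
  conv_lhs => rw [← hr]
  rw [← applyG_append, blockWord_pow q hq, applyG_wordPow, he, wordPow_mul]

theorem comm_of_letters (g h : Bool → Word) (ha : applyG g (h false) = applyG h (g false))
    (hb : applyG g (h true) = applyG h (g true)) :
    applyG g ∘ applyG h = applyG h ∘ applyG g := by
  funext w
  simp only [Function.comp]
  induction w with
  | nil => simp [applyG]
  | cons x w ih =>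
    have e : ∀ g : Bool → Word, applyG g (x :: w) = g x ++ applyG g w := by
      simp [applyG]
    rw [e, e, applyG_append, applyG_append, ih]
    cases x
    · rw [ha]
    · rw [hb]

/-- for `p`, `q` multiplicatively independent, `g₁g₂ = g₂g₁` iff (i) both
`g₁(b)` and `g₂(b)` are powers of `b`, or (ii) `g₁(a)=g₂(a)=a`, `g₁(b)=(ba^α)^{p-1}b`
and `g₂(b)=(ba^α)^{q-1}b` for a common `α`. -/
theorem stmt11 (s t : ℕ) (hs : 1 ≤ s) (ht : 1 ≤ t)
    (p q : ℕ) (hp : 2 ≤ p) (hq : 2 ≤ q)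
    (γ₁ γ₂ δ₁ δ₂ : ℕ) (α β : ℕ → ℕ)
    (g₁ g₂ : Bool → Word)
    (h₁a : g₁ false = rep s)
    (h₁b : g₁ true = rep γ₁ ++ blockWord p α ++ rep γ₂)
    (h₂a : g₂ false = rep t)
    (h₂b : g₂ true = rep δ₁ ++ blockWord q β ++ rep δ₂)
    (hind : ∀ i j : ℕ, p ^ i = q ^ j → i = 0 ∧ j = 0) :
    applyG g₁ ∘ applyG g₂ = applyG g₂ ∘ applyG g₁ ↔
      ((∃ k : ℕ, g₁ true = List.replicate k true) ∧
        (∃ k : ℕ, g₂ true = List.replicate k true)) ∨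
      (g₁ false = [false] ∧ g₂ false = [false] ∧
        ∃ α₀ : ℕ, g₁ true = blockWord p (fun _ => α₀) ∧
          g₂ true = blockWord q (fun _ => α₀)) := by
  obtain ⟨c1, k1, k2, k3⟩ := gb_facts p hp α γ₁ γ₂
  obtain ⟨d1, l1, l2, l3⟩ := gb_facts q hq β δ₁ δ₂
  rw [← h₁b] at c1 k1 k2 k3
  rw [← h₂b] at d1 l1 l2 l3
  constructor
  · intro hcomm
    have hw : applyG g₁ (g₂ true) = applyG g₂ (g₁ true) := by
      have := congrFun hcomm [true]
      simpa [applyG] using this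
    obtain ⟨u1, u2⟩ := KK_apply g₁ s p hp h₁a c1 (g₂ true)
    obtain ⟨v1, v2⟩ := KK_apply g₂ t q hq h₂a d1 (g₁ true)
    rw [d1] at u1 u2
    rw [c1] at v1 v2
    rw [← hw] at v1 v2
    have e0 : s * δ₁ + γ₁ = t * γ₁ + δ₁ := by
      have a1 := u2 0
      have a2 := v2 0
      rw [mul_zero] at a1 a2
      rw [a1] at a2
      simpa [k1, l1, show 0 < p by omega, show 0 < q by omega] using a2
    have e1 : s * δ₂ + γ₂ = t * γ₂ + δ₂ := by
      have a1 := u2 q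
      have a2 := v2 p
      rw [mul_comm q p, a1] at a2
      simpa [k2, l2, show 0 < p by omega, show 0 < q by omega] using a2
    obtain ⟨x, x1, x2, x3, x4⟩ := aux_core p q s t (γ₁ + γ₂) (δ₁ + δ₂) α β
      (KK (applyG g₁ (g₂ true))) hp hq hs ht
      (fun m r hm h0 hr => by rw [u1 m r hm h0 hr, k3 r h0 hr])
      (fun m h0 hm => by
        rw [u2, if_pos ⟨h0, hm.le⟩, if_pos hm, l3 m h0 hm, k1, k2]; ring)
      (fun m r hm h0 hr => by rw [v1 m r hm h0 hr, l3 r h0 hr])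
      (fun m h0 hm => by
        rw [v2, if_pos ⟨h0, hm.le⟩, if_pos hm, k3 m h0 hm, l1, l2]; ring)
      (by nlinarith) hind
    have f1 : x ≤ s * x := Nat.le_mul_of_pos_left x hs
    have f2 : x ≤ t * x := Nat.le_mul_of_pos_left x ht
    obtain rfl : γ₁ = 0 := by omega
    obtain rfl : γ₂ = 0 := by omega
    obtain rfl : δ₁ = 0 := by omega
    obtain rfl : δ₂ = 0 := by omega
    rw [blockWord_congr p α (fun _ => x) x1] at h₁b
    rw [blockWord_congr q β (fun _ => x) x2] at h₂b
    have r0 : rep 0 = [] := rfl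
    rw [r0, List.nil_append, List.append_nil] at h₁b h₂b
    rcases Nat.eq_zero_or_pos x with rfl | hx
    · left
      exact ⟨⟨p, by rw [h₁b, blockWord_zero p hp]⟩, ⟨q, by rw [h₂b, blockWord_zero q hq]⟩⟩
    · right
      obtain rfl : s = 1 := Nat.eq_of_mul_eq_mul_right hx (by omega)
      obtain rfl : t = 1 := Nat.eq_of_mul_eq_mul_right hx (by omega)
      exact ⟨h₁a, h₂a, x, h₁b, h₂b⟩
  · rintro (⟨⟨k, hk⟩, ⟨l, hl⟩⟩ | ⟨ha1, ha2, c, hb1, hb2⟩)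
    · apply comm_of_letters
      · rw [h₁a, h₂a, applyG_rep g₁ s t h₁a, applyG_rep g₂ t s h₂a, mul_comm]
      · rw [hk, hl, applyG_repb g₁ k l hk, applyG_repb g₂ l k hl, mul_comm]
    · apply comm_of_letters
      · rw [ha1, ha2]
        simp [applyG, ha1, ha2]
      · have e1 := block_apply g₁ p q c hp hq ha1 hb1
        have e2 := block_apply g₂ q p c hq hp ha2 hb2
        rw [mul_comm q p, ← e1] at e2
        rw [hb1, hb2]
        exact (List.append_cancel_right e2).symm
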